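/- arXiv:2603.12370 — 5 statements merged into one kernel-verified Lean document; each statement's English description precedes it below -/
import Mathlib

section
/- Let λ > 0, ε > 0 and V ≠ 0. Define φ : ℝ → ℝ by φ(ξ) = V − 1 − (3ε²/(25λV)) · (tanh²(εξ/(10λV)) + 2 tanh(εξ/(10λV)) − 1). Set H = V − 1 + 6ε²/(25λV) and h = V − 1 − 6ε²/(25λV). Then φ satisfies, for every ξ ∈ ℝ, the integrated travelling-wave equation (1 − V) φ(ξ) + φ(ξ)²/2 + λ V φ''(ξ) − ε φ'(ξ) = −H·h/2. -/
theorem gBBM_aux_tanh (x : ℝ) : HasDerivAt Real.tanh (1 - Real.tanh x ^ 2) x := by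
  have hc : Real.cosh x ≠ 0 := (Real.cosh_pos x).ne'
  have h := (Real.hasDerivAt_sinh x).div (Real.hasDerivAt_cosh x) hc
  have e : Real.tanh = Real.sinh / Real.cosh := by
    funext y
    simp [Real.tanh_eq_sinh_div_cosh]
  rw [e]
  refine h.congr_deriv ?_
  simp only [Pi.div_apply]
  field_simp

/-- the explicit tanh profile satisfies the integrated
travelling-wave equation `(1 − V) φ + φ²/2 + λ V φ'' − ε φ' = −H·h/2`,
where `H = V − 1 + 6ε²/(25λV)` and `h = V − 1 − 6ε²/(25λV)`. -/
theorem gBBM_explicit_first_integral (lam eps V : ℝ) (hlam : 0 < lam) (heps : 0 < eps)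
    (hV : V ≠ 0) (φ : ℝ → ℝ)
    (hφ : ∀ ξ : ℝ, φ ξ = V - 1 - (3 * eps ^ 2 / (25 * lam * V)) *
      (Real.tanh (eps * ξ / (10 * lam * V)) ^ 2
        + 2 * Real.tanh (eps * ξ / (10 * lam * V)) - 1))
    (H h : ℝ)
    (hH : H = V - 1 + 6 * eps ^ 2 / (25 * lam * V))
    (hh : h = V - 1 - 6 * eps ^ 2 / (25 * lam * V)) :
    ∀ ξ : ℝ,
      (1 - V) * φ ξ + φ ξ ^ 2 / 2 + lam * V * iteratedDeriv 2 φ ξ - eps * deriv φ ξ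
        = -(H * h) / 2 := by
  intro ξ
  have hl : lam ≠ 0 := hlam.ne'
  have hT : ∀ x : ℝ, HasDerivAt (fun y : ℝ => Real.tanh (eps * y / (10 * lam * V)))
      ((1 - Real.tanh (eps * x / (10 * lam * V)) ^ 2) * (eps / (10 * lam * V))) x := by
    intro x
    have h1 : HasDerivAt (fun y : ℝ => eps * y / (10 * lam * V)) (eps / (10 * lam * V)) x := by
      simpa using ((hasDerivAt_id x).const_mul eps).div_const (10 * lam * V)
    exact (gBBM_aux_tanh _).comp x h1
  have hφ' : φ = fun x => V - 1 - (3 * eps ^ 2 / (25 * lam * V)) *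
      (Real.tanh (eps * x / (10 * lam * V)) ^ 2
        + 2 * Real.tanh (eps * x / (10 * lam * V)) - 1) := funext hφ
  have hd : deriv φ = fun x => -(3 * eps ^ 2 / (25 * lam * V)) * (2 * (eps / (10 * lam * V))) *
      ((1 - Real.tanh (eps * x / (10 * lam * V)) ^ 2) *
        (1 + Real.tanh (eps * x / (10 * lam * V)))) := by
    funext x
    rw [hφ']
    refine HasDerivAt.deriv ((((((hT x).pow 2).add ((hT x).const_mul 2)).sub_const 1).const_mul
      (3 * eps ^ 2 / (25 * lam * V))).const_sub (V - 1) |>.congr_deriv ?_)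
    push_cast
    ring
  have hdd : deriv (deriv φ) ξ = -(3 * eps ^ 2 / (25 * lam * V)) * (2 * (eps / (10 * lam * V))) *
      ((eps / (10 * lam * V)) * (1 - Real.tanh (eps * ξ / (10 * lam * V)) ^ 2) *
        (1 + Real.tanh (eps * ξ / (10 * lam * V))) *
        (1 - 3 * Real.tanh (eps * ξ / (10 * lam * V)))) := by
    rw [hd]
    refine HasDerivAt.deriv (((((hT ξ).pow 2).const_sub 1).mul ((hT ξ).const_add 1)).const_mul
      (-(3 * eps ^ 2 / (25 * lam * V)) * (2 * (eps / (10 * lam * V)))) |>.congr_deriv ?_)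
    simp only [Pi.pow_apply]
    push_cast
    ring
  rw [iteratedDeriv_succ, iteratedDeriv_one, hdd, hd, hφ ξ, hH, hh]
  simp only []
  generalize Real.tanh (eps * ξ / (10 * lam * V)) = T
  field_simp
  ring
end

section
/- Let λ > 0, ε > 0 and V ≠ 0. Define φ : ℝ → ℝ by φ(ξ) = V − 1 − (3ε²/(25λV)) · (tanh²(εξ/(10λV)) + 2 tanh(εξ/(10λV)) − 1). Then φ satisfies the third-order travelling-wave ODE (1 − V) φ'(ξ) + φ(ξ) φ'(ξ) + λ V φ'''(ξ) − ε φ''(ξ) = 0 for every ξ ∈ ℝ. -/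
theorem tanh_scaled_hasDerivAt (e d x : ℝ) :
    HasDerivAt (fun ξ : ℝ => Real.tanh (e * ξ / d))
      (e / d * (1 - Real.tanh (e * x / d) ^ 2)) x := by
  have hc : Real.cosh (e * x / d) ≠ 0 := (Real.cosh_pos _).ne'
  have hl : HasDerivAt (fun ξ : ℝ => e * ξ / d) (e / d) x := by
    simpa using ((hasDerivAt_id x).const_mul e).div_const d
  have h := (hl.sinh).div (hl.cosh) hc
  have hf : (fun ξ : ℝ => Real.tanh (e * ξ / d)) =
      (fun ξ : ℝ => Real.sinh (e * ξ / d)) / (fun ξ : ℝ => Real.cosh (e * ξ / d)) := by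
    funext ξ
    simp [Real.tanh_eq_sinh_div_cosh]
  rw [hf]
  refine h.congr_deriv ?_
  rw [Real.tanh_eq_sinh_div_cosh, div_pow, one_sub_div (pow_ne_zero 2 hc), ← mul_div_assoc]
  congr 1
  ring

/-- the explicit tanh profile satisfies the third-order
travelling-wave ODE `(1 − V) φ' + φ φ' + λ V φ''' − ε φ'' = 0` on all of `ℝ`. -/
theorem gBBM_explicit_solves_ODE (lam eps V : ℝ) (hlam : 0 < lam) (heps : 0 < eps)
    (hV : V ≠ 0) (φ : ℝ → ℝ)
    (hφ : ∀ ξ : ℝ, φ ξ = V - 1 - (3 * eps ^ 2 / (25 * lam * V)) *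
      (Real.tanh (eps * ξ / (10 * lam * V)) ^ 2
        + 2 * Real.tanh (eps * ξ / (10 * lam * V)) - 1)) :
    ∀ ξ : ℝ,
      (1 - V) * deriv φ ξ + φ ξ * deriv φ ξ
        + lam * V * iteratedDeriv 3 φ ξ - eps * iteratedDeriv 2 φ ξ = 0 := by
  obtain ⟨t, ht⟩ : ∃ t : ℝ → ℝ, t = fun ξ => Real.tanh (eps * ξ / (10 * lam * V)) := ⟨_, rfl⟩
  obtain ⟨k, hk⟩ : ∃ k : ℝ, k = eps / (10 * lam * V) := ⟨_, rfl⟩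
  obtain ⟨A, hA⟩ : ∃ A : ℝ, A = 3 * eps ^ 2 / (25 * lam * V) := ⟨_, rfl⟩
  have hl : lam ≠ 0 := hlam.ne'
  have hd : ∀ x, HasDerivAt t (k * (1 - t x ^ 2)) x := by
    intro x
    rw [ht, hk]
    exact tanh_scaled_hasDerivAt _ _ x
  have h0 : φ = fun ξ => V - 1 - A * (t ξ ^ 2 + 2 * t ξ - 1) := by
    funext ξ
    rw [hφ, ht, hA]
  have h1 : deriv φ = fun ξ => -A * k * (2 + 2 * t ξ - 2 * t ξ ^ 2 - 2 * t ξ ^ 3) := by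
    funext x
    rw [h0]
    refine HasDerivAt.deriv ?_
    refine ((((((hd x).fun_pow 2).fun_add ((hd x).const_mul 2)).sub_const 1).const_mul
      A).const_sub (V - 1)).congr_deriv ?_
    push_cast
    ring
  have h2 : iteratedDeriv 2 φ = fun ξ =>
      -A * k ^ 2 * (2 - 4 * t ξ - 8 * t ξ ^ 2 + 4 * t ξ ^ 3 + 6 * t ξ ^ 4) := by
    rw [iteratedDeriv_succ, iteratedDeriv_one, h1]
    funext x
    refine HasDerivAt.deriv ?_
    refine ((((((hd x).const_mul 2).const_add 2).fun_sub (((hd x).fun_pow 2).const_mul 2)).fun_sub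
      (((hd x).fun_pow 3).const_mul 2)).const_mul (-A * k)).congr_deriv ?_
    push_cast
    ring
  have h3 : iteratedDeriv 3 φ = fun ξ =>
      -A * k ^ 3 * ((1 - t ξ ^ 2) * (-4 - 16 * t ξ + 12 * t ξ ^ 2 + 24 * t ξ ^ 3)) := by
    rw [iteratedDeriv_succ, h2]
    funext x
    refine HasDerivAt.deriv ?_
    refine (((((((hd x).const_mul 4).const_sub 2).fun_sub (((hd x).fun_pow 2).const_mul 8)).fun_add
      (((hd x).fun_pow 3).const_mul 4)).fun_add (((hd x).fun_pow 4).const_mul 6)).const_mul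
      (-A * k ^ 2)).congr_deriv ?_
    push_cast
    ring
  intro ξ
  have hA' : A = 12 * lam * V * k ^ 2 := by
    rw [hA, hk]
    field_simp
    norm_num
  have he : eps = 10 * lam * V * k := by
    rw [hk]
    field_simp
  rw [h3, h2, h1, h0]
  simp only
  rw [hA', he]
  ring
end

section
/- Let λ > 0, ε > 0, V ≠ 0 and s ∈ ℝ. Define u : ℝ × ℝ → ℝ by u(x,t) = V − 1 − (3ε²/(25λV)) · (tanh²(ε(x + s − Vt)/(10λV)) + 2 tanh(ε(x + s − Vt)/(10λV)) − 1). Then u satisfies the generalized BBM equation u_t + u_x + u u_x − λ u_{xxt} − ε u_{xx} = 0 at every point (x,t) ∈ ℝ × ℝ. -/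
/-- the explicit travelling wave
`u(x,t) = V − 1 − (3ε²/(25λV))(tanh²(ε(x+s−Vt)/(10λV)) + 2 tanh(ε(x+s−Vt)/(10λV)) − 1)`
satisfies the generalized BBM equation `u_t + u_x + u u_x − λ u_{xxt} − ε u_{xx} = 0`
at every point `(x,t)`. -/
theorem gBBM_explicit_solution (lam eps V s : ℝ) (hlam : 0 < lam) (heps : 0 < eps)
    (hV : V ≠ 0) (u : ℝ → ℝ → ℝ)
    (hu : ∀ x t : ℝ, u x t = V - 1 - (3 * eps ^ 2 / (25 * lam * V)) *
      (Real.tanh (eps * (x + s - V * t) / (10 * lam * V)) ^ 2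
        + 2 * Real.tanh (eps * (x + s - V * t) / (10 * lam * V)) - 1)) :
    ∀ x t : ℝ,
      deriv (fun τ => u x τ) t
      + deriv (fun y => u y t) x
      + u x t * deriv (fun y => u y t) x
      - lam * deriv (fun τ => deriv (fun y => deriv (fun z => u z τ) y) x) t
      - eps * deriv (fun y => deriv (fun z => u z t) y) x = 0 := by
  intro x t
  have hl : lam ≠ 0 := hlam.ne'
  obtain ⟨k, hk⟩ : ∃ k, k = eps / (10 * lam * V) := ⟨_, rfl⟩
  obtain ⟨A, hA⟩ : ∃ A, A = 3 * eps ^ 2 / (25 * lam * V) := ⟨_, rfl⟩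
  obtain ⟨T, hT⟩ : ∃ T : ℝ → ℝ → ℝ, T = fun x t => Real.tanh (k * (x + s - V * t)) := ⟨_, rfl⟩
  have hu' : ∀ x t, u x t = V - 1 - A * (T x t ^ 2 + 2 * T x t - 1) := by
    intro x t
    have e : eps * (x + s - V * t) / (10 * lam * V) = k * (x + s - V * t) := by
      rw [hk]; ring
    rw [hu, e, hA, hT]
  have hTx : ∀ x t, HasDerivAt (fun y => T y t) (k * (1 - T x t ^ 2)) x := by
    intro x t
    have h1 : HasDerivAt (fun y : ℝ => k * (y + s - V * t)) k x := by
      simpa using (((hasDerivAt_id x).add_const s).sub_const (V * t)).const_mul k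
    have h := (gBBM_aux_tanh (k * (x + s - V * t))).comp x h1
    rw [hT]
    exact h.congr_deriv (by ring)
  have hTt : ∀ x t, HasDerivAt (fun y => T x y) (-V * k * (1 - T x t ^ 2)) t := by
    intro x t
    have h1 : HasDerivAt (fun y : ℝ => k * (x + s - V * y)) (k * -V) t := by
      simpa using (((hasDerivAt_id t).const_mul V).const_sub (x + s)).const_mul k
    have h := (gBBM_aux_tanh (k * (x + s - V * t))).comp t h1
    rw [hT]
    exact h.congr_deriv (by ring)
  have dx : ∀ x t, deriv (fun y => u y t) x
      = -2 * A * k * (T x t + 1 - T x t ^ 3 - T x t ^ 2) := by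
    intro x t
    simp only [hu']
    have h := (((((hTx x t).pow 2).add ((hTx x t).const_mul 2)).sub_const 1).const_mul
      A).const_sub (V - 1)
    refine (h.congr_deriv ?_).deriv
    push_cast
    ring
  have dt : deriv (fun y => u x y) t
      = 2 * V * A * k * (T x t + 1 - T x t ^ 3 - T x t ^ 2) := by
    simp only [hu']
    have h := (((((hTt x t).pow 2).add ((hTt x t).const_mul 2)).sub_const 1).const_mul
      A).const_sub (V - 1)
    refine (h.congr_deriv ?_).deriv
    push_cast
    ring
  have dxx : ∀ x t, deriv (fun y => deriv (fun z => u z t) y) x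
      = -2 * A * k ^ 2 * (1 - 2 * T x t - 4 * T x t ^ 2 + 2 * T x t ^ 3 + 3 * T x t ^ 4) := by
    intro x t
    simp only [dx]
    have h := ((((hTx x t).add_const 1).sub ((hTx x t).pow 3)).sub
      ((hTx x t).pow 2)).const_mul (-2 * A * k)
    refine (h.congr_deriv ?_).deriv
    push_cast
    ring
  have dxxt : deriv (fun τ => deriv (fun y => deriv (fun z => u z τ) y) x) t
      = 2 * V * A * k ^ 3 * (-2 - 8 * T x t + 6 * T x t ^ 2 + 12 * T x t ^ 3)
        * (1 - T x t ^ 2) := by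
    simp only [dxx]
    have h := ((((((hTt x t).const_mul 2).const_sub 1).sub (((hTt x t).pow 2).const_mul 4)).add
      (((hTt x t).pow 3).const_mul 2)).add (((hTt x t).pow 4).const_mul 3)).const_mul
      (-2 * A * k ^ 2)
    refine (h.congr_deriv ?_).deriv
    push_cast
    ring
  rw [dt, dx, dxxt, dxx, hu']
  generalize T x t = w
  rw [hA, hk]
  field_simp
  ring
end

section
/- Let λ > 0, ε > 0 and V ≠ 0, and define φ : ℝ → ℝ by φ(ξ) = V − 1 − (3ε²/(25λV)) · (tanh²(εξ/(10λV)) + 2 tanh(εξ/(10λV)) − 1). Then φ'(ξ) < 0 for every ξ ∈ ℝ; in particular φ is strictly decreasing on ℝ (a monotonic shock profile). -/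
theorem hasDerivAt_tanh_aux (x : ℝ) :
    HasDerivAt Real.tanh (1 / Real.cosh x ^ 2) x := by
  have hc : Real.cosh x ≠ 0 := (Real.cosh_pos x).ne'
  have h := (Real.hasDerivAt_sinh x).div (Real.hasDerivAt_cosh x) hc
  have e : Real.tanh = Real.sinh / Real.cosh := by
    funext y
    simp [Real.tanh_eq_sinh_div_cosh]
  rw [e]
  have hs : Real.cosh x * Real.cosh x - Real.sinh x * Real.sinh x = 1 := by
    have := Real.cosh_sq x
    nlinarith
  rw [hs] at h
  exact h

/-- the explicit tanh profile is strictly decreasing: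
`φ'(ξ) < 0` for every `ξ`, hence `φ` is strictly antitone (a monotonic shock). -/
theorem gBBM_explicit_monotone (lam eps V : ℝ) (hlam : 0 < lam) (heps : 0 < eps)
    (hV : V ≠ 0) (φ : ℝ → ℝ)
    (hφ : ∀ ξ : ℝ, φ ξ = V - 1 - (3 * eps ^ 2 / (25 * lam * V)) *
      (Real.tanh (eps * ξ / (10 * lam * V)) ^ 2
        + 2 * Real.tanh (eps * ξ / (10 * lam * V)) - 1)) :
    (∀ ξ : ℝ, deriv φ ξ < 0) ∧ StrictAnti φ := by
  have key : ∀ ξ : ℝ, deriv φ ξ < 0 := by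
    intro ξ
    have h1 : HasDerivAt (fun ξ : ℝ => eps * ξ / (10 * lam * V))
        (eps * 1 / (10 * lam * V)) ξ :=
      ((hasDerivAt_id ξ).const_mul eps).div_const _
    have h2 : HasDerivAt (fun ξ : ℝ => Real.tanh (eps * ξ / (10 * lam * V)))
        (1 / Real.cosh (eps * ξ / (10 * lam * V)) ^ 2 * (eps * 1 / (10 * lam * V))) ξ :=
      HasDerivAt.comp (h₂ := Real.tanh) ξ (hasDerivAt_tanh_aux (eps * ξ / (10 * lam * V))) h1
    have h3 := ((((h2.fun_pow 2).fun_add (h2.const_mul 2)).sub_const 1).const_mul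
      (3 * eps ^ 2 / (25 * lam * V))).const_sub (V - 1)
    rw [funext hφ, h3.deriv]
    have hT := Real.neg_one_lt_tanh (eps * ξ / (10 * lam * V))
    have hC := Real.cosh_pos (eps * ξ / (10 * lam * V))
    generalize Real.tanh (eps * ξ / (10 * lam * V)) = T at *
    generalize Real.cosh (eps * ξ / (10 * lam * V)) = C at *
    have hV2 : 0 < V ^ 2 := by positivity
    have hT' : 0 < T + 1 := by linarith
    have : 0 < 3 * eps ^ 3 * (T + 1) / (125 * lam ^ 2 * V ^ 2 * C ^ 2) := by positivity
    refine lt_of_eq_of_lt ?_ (neg_lt_zero.mpr this)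
    have := hlam.ne'
    have := hC.ne'
    field_simp
    push_cast
    ring
  exact ⟨key, strictAnti_of_deriv_neg key⟩
end

section
/- Let λ > 0, ε > 0, H, h ∈ ℝ with H ≠ h, set V = 1 + (H + h)/2 and assume V ≠ 0. Then at least one of the two quantities D_H = (ε/(2λV))² + (V − 1 − H)/(λV) and D_h = (ε/(2λV))² + (V − 1 − h)/(λV) is negative if and only if |(H + 1)² − (h + 1)²| > ε²/λ. Consequently, the linearization at one of the fixed points H, h has non-real characteristic roots (oscillatory shock) exactly when |(H + 1)² − (h + 1)²| > ε²/λ, and both fixed points have real characteristic roots (monotonic shock) exactly when |(H + 1)² − (h + 1)²| ≤ ε²/λ (with equality the borderline case). -/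
/-- with `V = 1 + (H + h)/2 ≠ 0` and `H ≠ h`, setting
`D_H = (ε/(2λV))² + (V − 1 − H)/(λV)` and `D_h = (ε/(2λV))² + (V − 1 − h)/(λV)`,
at least one of `D_H`, `D_h` is negative (oscillatory shock: non-real
characteristic roots at one fixed point) iff `|(H + 1)² − (h + 1)²| > ε²/λ`,
and both are nonnegative (monotonic shock: all roots real) iff
`|(H + 1)² − (h + 1)²| ≤ ε²/λ`. -/
theorem gBBM_oscillatory_criterion (lam eps H h V : ℝ) (hlam : 0 < lam) (heps : 0 < eps)
    (hHh : H ≠ h) (hV : V = 1 + (H + h) / 2) (hV0 : V ≠ 0)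
    (DH Dh : ℝ)
    (hDH : DH = (eps / (2 * lam * V)) ^ 2 + (V - 1 - H) / (lam * V))
    (hDh : Dh = (eps / (2 * lam * V)) ^ 2 + (V - 1 - h) / (lam * V)) :
    ((DH < 0 ∨ Dh < 0) ↔ eps ^ 2 / lam < |(H + 1) ^ 2 - (h + 1) ^ 2|)
    ∧ ((0 ≤ DH ∧ 0 ≤ Dh) ↔ |(H + 1) ^ 2 - (h + 1) ^ 2| ≤ eps ^ 2 / lam) := by
  have hp : 0 < 1 / (4 * lam * V ^ 2) := by positivity
  have e1 : DH = (eps ^ 2 / lam - ((H + 1) ^ 2 - (h + 1) ^ 2)) * (1 / (4 * lam * V ^ 2)) := by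
    have hd : (H + 1) ^ 2 - (h + 1) ^ 2 = 2 * V * (H - h) := by rw [hV]; ring
    have hn : V - 1 - H = -(H - h) / 2 := by rw [hV]; ring
    rw [hDH, hd, hn]
    field_simp
    ring
  have e2 : Dh = (eps ^ 2 / lam + ((H + 1) ^ 2 - (h + 1) ^ 2)) * (1 / (4 * lam * V ^ 2)) := by
    have hd : (H + 1) ^ 2 - (h + 1) ^ 2 = 2 * V * (H - h) := by rw [hV]; ring
    have hn : V - 1 - h = (H - h) / 2 := by rw [hV]; ring
    rw [hDh, hd, hn]
    field_simp
    ring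
  have key : (0 ≤ DH ∧ 0 ≤ Dh) ↔ |(H + 1) ^ 2 - (h + 1) ^ 2| ≤ eps ^ 2 / lam := by
    rw [e1, e2, mul_nonneg_iff_of_pos_right hp, mul_nonneg_iff_of_pos_right hp, abs_le]
    constructor
    · rintro ⟨h1, h2⟩
      constructor <;> linarith
    · rintro ⟨h1, h2⟩
      constructor <;> linarith
  refine ⟨?_, key⟩
  rw [← not_le (a := |(H + 1) ^ 2 - (h + 1) ^ 2|), ← key, not_and_or, not_le, not_le]
end
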